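/- Let (G,H) be a feasible Eulerian instance with three pairs of terminals, let (G',H') be an instance obtained from (G,H) by a single local move, and suppose (G',H') is infeasible. Then there exists a subset U ⊆ VG such that d_{G'}(U) + 1 = d_G(U) = d_H(U) = d_{H'}(U) − 1; in particular d_H(U) ∈ {1, 2}. -/

import Mathlib

/-!
The proof works with joins instead of paths: for an edge set `W`, the parities of its degrees form
a boundary `bd G W : V → ZMod 2`, and `W` contains a `u`–`v` path as soon as its boundary is
`chi u + chi v`. Joins can be united, subtracted and compared with linear algebra over `ZMod 2`, and
the Eulerian hypothesis reads `bd G univ = bd H univ`.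

Fix pairwise disjoint joins for the three demands of `(G, H)`. If `e₀` is not used by a demand other
than `ab`, all edges not used by the other two demands form an `a`–`b` join containing `e₀`, and
deleting `e₀` from it routes `a'b`. So suppose that the join of another demand `st` uses `e₀`, and
let `zz'` be the third demand. Deleting `e₀` leaves disjoint joins which, up to exchanging `s` and
`t`, connect `s` to `a` and `a'` to `t` (or else the local move is feasible outright); combining
the first of them with the join for `ab`, the demands `sb`, `a't`, `zz'` are routed in `G'`, while
`st`, `a'b`, `zz'` are wanted.

This is the uncrossing problem of `good_or_smallCut`: in a graph whose odd vertices are `p, q, r, s,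
z, z'`, with demands `pq`, `rs`, `zz'` routed, route `ps`, `rq`, `zz'`. Let `Z` be the trail
for `zz'` and `F` the remaining edges.

* If `p` and `r` are connected in `F`, any `p`–`s` join in `F` leaves an `r`–`q` join behind
  (`good_of_meet`).
* If `Z` meets a component of `F`, then the component of `r`, and then the first component again,
  the portion of `Z` in between can be exchanged for a join inside the first component (`reroute`).
  If that is the component of `p`, the freed portion connects `p` to `r` (`exists_join_keeping`) and
  the first case applies. Otherwise the components of `p` and `r` together gain edges, which is
  excluded when `Z` is chosen with these components as large as possible. The same holds with the
  roles of `p` and `r` exchanged.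
* If there is no such return, `Z` changes at most once between the components of `p` and `r`, and
  the edge of `Z` following the last visit to the first of them is the only edge crossing a certain
  cut `U` between `p, q` and `r, s` (`smallCut_of_last`).

So the infeasibility of `(G', H')` yields a set `U` containing `s`, `b` but not `t`, `a'`, with
`d_{G'}(U) ≤ 1`. The cut condition for `(G, H)` forces `a ∈ U`, and together with the equality of
the parities of `d_G(U)` and `d_H(U)` it gives the stated equalities.
-/

/-!
We encode a multigraph on vertex type `V` with edge-index type `E` by a map
`G : E → V × V`: the edge with index `e` joins the (unordered) endpoints
`(G e).1` and `(G e).2`.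
-/

/-- The degree of `v` in the multigraph `G`: the number of edge-ends of `G`
incident to `v` (a loop counts twice). -/
noncomputable def mdeg {V E : Type} (G : E → V × V) (v : V) : ℕ :=
  Set.ncard {p : E × Bool | (cond p.2 (G p.1).1 (G p.1).2) = v}

/-- `mcut G U` is `d_G(U)`: the number of edges of `G` having exactly one
endpoint in `U`. -/
noncomputable def mcut {V E : Type} (G : E → V × V) (U : Set V) : ℕ :=
  Set.ncard {e : E | ((G e).1 ∈ U ∧ (G e).2 ∉ U) ∨ ((G e).2 ∈ U ∧ (G e).1 ∉ U)}

/-- Walks in the multigraph `G`; an edge may be traversed in either direction. -/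
inductive MWalk {V E : Type} (G : E → V × V) : V → V → Type where
  | nil (v : V) : MWalk G v v
  | cons {u v w : V} (e : E) (he : G e = (u, v) ∨ G e = (v, u)) (tail : MWalk G v w) :
      MWalk G u w

namespace MWalk
/-- The list of edges traversed by a walk. -/
def edges {V E : Type} {G : E → V × V} : {u v : V} → MWalk G u v → List E
  | _, _, nil _ => []
  | _, _, cons e _ p => e :: p.edges
end MWalk

/-- An instance `(G, H)` (`H` is the demand multigraph, on the same vertex set)
is feasible if the demand edges can be routed by pairwise edge-disjoint paths
of `G`: for each demand edge `i` there is a walk of `G` connecting its two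
endpoints, the walks being pairwise edge-disjoint. -/
def MFeasible {V E E' : Type} (G : E → V × V) (H : E' → V × V) : Prop :=
  ∃ P : (i : E') → MWalk G (H i).1 (H i).2,
    ∀ i j : E', i ≠ j → List.Disjoint (P i).edges (P j).edges

/-- The multigraph `G` is connected (all of its vertex set lies in one
connected component). -/
def MConnected {V E : Type} (G : E → V × V) : Prop :=
  ∀ u v : V, Nonempty (MWalk G u v)

/-- The subgraph `G[U]` induced by `U` is connected: any two vertices of `U`
are joined by a walk all of whose edges have both endpoints in `U`. -/
def MInducedConnected {V E : Type} (G : E → V × V) (U : Set V) : Prop :=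
  ∀ u ∈ U, ∀ v ∈ U, ∃ p : MWalk G u v, ∀ e ∈ p.edges, (G e).1 ∈ U ∧ (G e).2 ∈ U

/-- The instance `(G, H)` is Eulerian: every vertex of `G + H` has even degree. -/
def MEulerian {V E E' : Type} (G : E → V × V) (H : E' → V × V) : Prop :=
  ∀ v : V, Even (mdeg G v + mdeg H v)

/-! ### Boundaries of edge sets modulo two -/

open Classical in
/-- The indicator of the vertex `v`, as a function with values in `ZMod 2`. -/
noncomputable def chi {V : Type} (v x : V) : ZMod 2 := if x = v then 1 else 0

/-- The boundary modulo two of an edge set `S`: at each vertex, the parity of its degree in `S`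
(a loop contributes zero). An edge set with boundary `chi u + chi v` is a `u`–`v` join. -/
noncomputable def bd {V E : Type} (G : E → V × V) (S : Finset E) : V → ZMod 2 :=
  ∑ e ∈ S, (chi (G e).1 + chi (G e).2)

/-- `u` and `v` are endpoints of a common edge of `S`. -/
def SAdj {V E : Type} (G : E → V × V) (S : Finset E) (u v : V) : Prop :=
  ∃ e ∈ S, G e = (u, v) ∨ G e = (v, u)

/-- `u` and `v` lie in the same connected component of the graph with edge set `S`. -/
def Reach {V E : Type} (G : E → V × V) (S : Finset E) : V → V → Prop :=
  Relation.ReflTransGen (SAdj G S)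

/-- The sequences `x 0, …, x n` of vertices and `ε 0, …, ε (n - 1)` of edges form a trail from
`u` to `v` in the edge set `S`: consecutive vertices are joined by the corresponding edge, and no
edge is repeated. Values of `x` and `ε` at larger indices are irrelevant. -/
structure IsTrail {V E : Type} (G : E → V × V) (S : Finset E) (u v : V) (n : ℕ)
    (x : ℕ → V) (ε : ℕ → E) : Prop where
  start : x 0 = u
  finish : x n = v
  mem : ∀ i < n, ε i ∈ S
  step : ∀ i < n, G (ε i) = (x i, x (i + 1)) ∨ G (ε i) = (x (i + 1), x i)
  inj : ∀ i < n, ∀ j < n, ε i = ε j → i = j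

theorem chi_self {V : Type} (v : V) : chi v v = 1 := by simp [chi]

theorem chi_ne {V : Type} {v x : V} (h : x ≠ v) : chi v x = 0 := by simp [chi, h]

theorem eq_of_chi_ne {V : Type} {v x : V} (h : chi v x ≠ 0) : x = v := by
  by_contra hx
  exact h (chi_ne hx)

theorem two_zero {V : Type} : (2 : V → ZMod 2) = 0 := by
  funext x
  exact (by decide : (2 : ZMod 2) = 0)

theorem bd_edge {V E : Type} {G : E → V × V} {e : E} {u v : V}
    (h : G e = (u, v) ∨ G e = (v, u)) : chi (G e).1 + chi (G e).2 = chi u + chi v := by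
  rcases h with h | h <;> simp [h, add_comm]

theorem bd_union {V E : Type} [DecidableEq E] (G : E → V × V) {A B : Finset E}
    (h : Disjoint A B) : bd G (A ∪ B) = bd G A + bd G B := by
  simp [bd, Finset.sum_union h]

theorem bd_sdiff {V E : Type} [DecidableEq E] (G : E → V × V) {A B : Finset E}
    (h : B ⊆ A) : bd G (A \ B) = bd G A + bd G B := by
  have h1 : bd G (A \ B) + bd G B = bd G A := Finset.sum_sdiff h
  linear_combination h1 - bd G B * two_zero (V := V)

theorem bd_symmDiff {V E : Type} [DecidableEq E] (G : E → V × V) (A B : Finset E) :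
    bd G (symmDiff A B) = bd G A + bd G B := by
  have h1 := bd_sdiff G (Finset.inter_subset_left : A ∩ B ⊆ A)
  have h2 := bd_sdiff G (Finset.inter_subset_right : A ∩ B ⊆ B)
  have h3 : symmDiff A B = (A \ (A ∩ B)) ∪ (B \ (A ∩ B)) := by
    ext e
    simp only [Finset.mem_symmDiff, Finset.mem_union, Finset.mem_sdiff, Finset.mem_inter]
    tauto
  rw [h3, bd_union, h1, h2]
  · linear_combination bd G (A ∩ B) * two_zero (V := V)
  · rw [Finset.disjoint_left]
    intro e
    simp only [Finset.mem_sdiff, Finset.mem_inter]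
    tauto

theorem bd_erase {V E : Type} [DecidableEq E] (G : E → V × V) {S : Finset E} {e : E} {u v : V}
    (he : e ∈ S) (h : G e = (u, v) ∨ G e = (v, u)) :
    bd G (S.erase e) = bd G S + chi u + chi v := by
  have h1 : chi (G e).1 + chi (G e).2 + bd G (S.erase e) = bd G S :=
    Finset.add_sum_erase S (fun e => chi (G e).1 + chi (G e).2) he
  rw [bd_edge h] at h1
  linear_combination h1 - (chi u + chi v) * two_zero (V := V)

/-! ### Connectivity inside an edge set -/

theorem SAdj.symm {V E : Type} {G : E → V × V} {S : Finset E} {u v : V} (h : SAdj G S u v) :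
    SAdj G S v u := by
  obtain ⟨e, he, h⟩ := h
  exact ⟨e, he, h.symm⟩

theorem Reach.refl {V E : Type} (G : E → V × V) (S : Finset E) (u : V) : Reach G S u u :=
  Relation.ReflTransGen.refl

theorem Reach.trans {V E : Type} {G : E → V × V} {S : Finset E} {u v w : V}
    (h : Reach G S u v) (h' : Reach G S v w) : Reach G S u w :=
  Relation.ReflTransGen.trans h h'

theorem Reach.symm {V E : Type} {G : E → V × V} {S : Finset E} {u v : V}
    (h : Reach G S u v) : Reach G S v u := by
  induction h with
  | refl => exact Reach.refl G S u
  | tail _ hs ih => exact Relation.ReflTransGen.head hs.symm ih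

theorem Reach.mono {V E : Type} {G : E → V × V} {S T : Finset E} (hST : S ⊆ T) {u v : V}
    (h : Reach G S u v) : Reach G T u v :=
  Relation.ReflTransGen.mono (r := SAdj G S) (p := SAdj G T)
    (fun _ _ ⟨e, he, h⟩ => ⟨e, hST he, h⟩) _ _ h

theorem Reach.edge {V E : Type} {G : E → V × V} {S : Finset E} {e : E} (he : e ∈ S) {u v : V}
    (h : G e = (u, v) ∨ G e = (v, u)) : Reach G S u v :=
  Relation.ReflTransGen.single ⟨e, he, h⟩

theorem Reach.ends {V E : Type} {G : E → V × V} {S : Finset E} {e : E} (he : e ∈ S) :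
    Reach G S (G e).1 (G e).2 :=
  Reach.edge he (Or.inl rfl)

theorem Reach.closed {V E : Type} {G : E → V × V} {S : Finset E} {u v : V} (Q : Set V)
    (hQ : ∀ e ∈ S, (G e).1 ∈ Q ↔ (G e).2 ∈ Q) (h : Reach G S u v) (hu : u ∈ Q) : v ∈ Q := by
  induction h with
  | refl => exact hu
  | tail _ hs ih =>
    obtain ⟨e, he, h | h⟩ := hs
    · have := hQ e he
      simp only [h] at this
      exact this.1 ih
    · have := hQ e he
      simp only [h] at this
      exact this.2 ih

/-- Deleting edges of one component does not affect connectivity in the others. -/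
theorem Reach.avoid {V E : Type} [DecidableEq E] {G : E → V × V} {S M : Finset E} {c u v : V}
    (hM : ∀ e ∈ M, Reach G S c (G e).1) (hc : ¬ Reach G S c u) (h : Reach G S u v) :
    Reach G (S \ M) u v := by
  induction h with
  | refl => exact Reach.refl _ _ _
  | @tail w v huw hs ih =>
    obtain ⟨e, he, h⟩ := hs
    refine ih.trans (Reach.edge (e := e) (Finset.mem_sdiff.2 ⟨he, fun heM => hc ?_⟩) h)
    have h1 := hM e heM
    have h2 := h1.trans (Reach.ends he)
    have h3 : Reach G S c w := by
      rcases h with h | h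
      · simpa [h] using h1
      · simpa [h] using h2
    exact h3.trans (Reach.symm huw)

/-! ### Trails and joins -/

/-- The set of edges `ε i, …, ε (j - 1)` of a trail. -/
def seg {E : Type} [DecidableEq E] (ε : ℕ → E) (i j : ℕ) : Finset E := (Finset.Ico i j).image ε

theorem IsTrail.mono {V E : Type} {G : E → V × V} {S T : Finset E} (hST : S ⊆ T) {u v : V} {n : ℕ}
    {x : ℕ → V} {ε : ℕ → E} (h : IsTrail G S u v n x ε) : IsTrail G T u v n x ε :=
  ⟨h.start, h.finish, fun i hi => hST (h.mem i hi), h.step, h.inj⟩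

theorem IsTrail.cons {V E : Type} [DecidableEq E] {G : E → V × V} {S : Finset E} {e : E}
    (he : e ∈ S) {u w v : V} (hG : G e = (u, w) ∨ G e = (w, u)) {n : ℕ} {x : ℕ → V} {ε : ℕ → E}
    (h : IsTrail G (S.erase e) w v n x ε) :
    ∃ n x ε, IsTrail G S u v n x ε := by
  refine ⟨n + 1, fun i => Nat.casesOn i u x, fun i => Nat.casesOn i e ε, rfl, h.finish, ?_, ?_, ?_⟩
  · rintro (_ | i) hi
    · exact he
    · exact Finset.mem_of_mem_erase (h.mem i (by omega))
  · rintro (_ | i) hi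
    · simpa [h.start] using hG
    · exact h.step i (by omega)
  · rintro (_ | i) hi (_ | j) hj hij
    · rfl
    · exact absurd hij.symm (Finset.ne_of_mem_erase (h.mem j (by omega)))
    · exact absurd hij (Finset.ne_of_mem_erase (h.mem i (by omega)))
    · rw [h.inj i (by omega) j (by omega) hij]

/-- A vertex of odd degree in `S` is joined by a trail in `S` to another vertex of odd degree:
leave the vertex along any non-loop edge, delete that edge, and continue. -/
theorem exists_trail_of_odd {V E : Type} [DecidableEq E] (G : E → V × V) (S : Finset E) :
    ∀ u, bd G S u = 1 → ∃ v, v ≠ u ∧ bd G S v = 1 ∧ ∃ n x ε, IsTrail G S u v n x ε := by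
  induction S using Finset.strongInduction with
  | H S ih =>
    intro u hu
    obtain ⟨e, he, hne⟩ : ∃ e ∈ S, chi (G e).1 u + chi (G e).2 u ≠ 0 := by
      refine Finset.exists_ne_zero_of_sum_ne_zero (s := S)
        (f := fun e => chi (G e).1 u + chi (G e).2 u) ?_
      have : bd G S u = ∑ e ∈ S, (chi (G e).1 u + chi (G e).2 u) := by simp [bd]
      rw [← this, hu]
      decide
    obtain ⟨w, hwu, hG⟩ : ∃ w, w ≠ u ∧ (G e = (u, w) ∨ G e = (w, u)) := by
      have h11 : (1 : ZMod 2) + 1 = 0 := by decide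
      by_cases h1 : u = (G e).1
      · refine ⟨(G e).2, fun h2 => hne ?_, Or.inl (by rw [h1])⟩
        rw [← h1, h2, chi_self, h11]
      · by_cases h2 : u = (G e).2
        · exact ⟨(G e).1, fun h3 => h1 h3.symm, Or.inr (by rw [h2])⟩
        · rw [chi_ne h1, chi_ne h2] at hne
          exact absurd (add_zero _) hne
    have hbd := bd_erase G he hG
    have hsing : IsTrail G (S.erase e) w w 0 (fun _ => w) (fun _ => e) :=
      ⟨rfl, rfl, fun i hi => by omega, fun i hi => by omega, fun i hi => by omega⟩
    by_cases hw : bd G S w = 1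
    · exact ⟨w, hwu, hw, hsing.cons he hG⟩
    · have hw0 : bd G S w = 0 := by
        generalize bd G S w = t at hw
        revert t
        decide
      have hw1 : bd G (S.erase e) w = 1 := by
        simp [hbd, hw0, chi_self, chi_ne hwu]
      have hu0 : bd G (S.erase e) u = 0 := by
        simp only [hbd, Pi.add_apply, hu, chi_self, chi_ne hwu.symm]
        decide
      obtain ⟨v, hvw, hv, n, x, ε, ht⟩ := ih _ (Finset.erase_ssubset he) w hw1
      have hvu : v ≠ u := by
        rintro rfl
        rw [hu0] at hv
        exact absurd hv (by decide)
      refine ⟨v, hvu, ?_, ht.cons he hG⟩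
      simpa [hbd, chi_ne hvu, chi_ne hvw] using hv

theorem exists_trail_of_join {V E : Type} [DecidableEq E] [Nonempty E] {G : E → V × V}
    {S : Finset E} {u v : V} (h : bd G S = chi u + chi v) : ∃ n x ε, IsTrail G S u v n x ε := by
  by_cases huv : u = v
  · subst huv
    exact ⟨0, fun _ => u, fun _ => Classical.arbitrary E, rfl, rfl, fun i hi => by omega,
      fun i hi => by omega, fun i hi => by omega⟩
  · obtain ⟨w, hwu, hw, ht⟩ := exists_trail_of_odd G S u (by simp [h, chi_self, chi_ne huv])
    have : w = v := by
      refine eq_of_chi_ne fun h0 => ?_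
      simp [h, chi_ne hwu, h0] at hw
    rwa [this] at ht

section Trail
variable {V E : Type} [DecidableEq E] {G : E → V × V} {S : Finset E} {u v : V} {n : ℕ}
  {x : ℕ → V} {ε : ℕ → E}

theorem mem_seg {i j : ℕ} {e : E} : e ∈ seg ε i j ↔ ∃ k, i ≤ k ∧ k < j ∧ ε k = e := by
  simp [seg, and_assoc]

theorem seg_mono {i j i' j' : ℕ} (hi : i' ≤ i) (hj : j ≤ j') : seg ε i j ⊆ seg ε i' j' := by
  intro e he
  obtain ⟨k, h1, h2, h3⟩ := mem_seg.1 he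
  exact mem_seg.2 ⟨k, by omega, by omega, h3⟩

theorem IsTrail.seg_subset (h : IsTrail G S u v n x ε) {i j : ℕ} (hj : j ≤ n) :
    seg ε i j ⊆ S := by
  intro e he
  obtain ⟨k, h1, h2, rfl⟩ := mem_seg.1 he
  exact h.mem k (by omega)

theorem IsTrail.bd_seg (h : IsTrail G S u v n x ε) {i j : ℕ} (hij : i ≤ j) (hj : j ≤ n) :
    bd G (seg ε i j) = chi (x i) + chi (x j) := by
  induction j, hij using Nat.le_induction with
  | base =>
    simp only [seg, Finset.Ico_self, Finset.image_empty, bd, Finset.sum_empty]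
    linear_combination -chi (x i) * two_zero (V := V)
  | succ j hij ih =>
    have h1 : seg ε i (j + 1) = insert (ε j) (seg ε i j) := by
      rw [seg, seg, ← Finset.image_insert]
      congr 1
      ext k
      simp only [Finset.mem_Ico, Finset.mem_insert]
      omega
    have h2 : ε j ∉ seg ε i j := by
      intro hm
      obtain ⟨k, h3, h4, h5⟩ := mem_seg.1 hm
      have := h.inj k (by omega) j (by omega) h5
      omega
    have h3 : bd G (insert (ε j) (seg ε i j)) = _ := Finset.sum_insert h2
    rw [h1, h3, bd_edge (h.step j (by omega))]
    have := ih (by omega)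
    unfold bd at this
    linear_combination this + chi (x j) * two_zero (V := V)

theorem IsTrail.reach_seg (h : IsTrail G S u v n x ε) {i j : ℕ} (hij : i ≤ j) (hj : j ≤ n) :
    Reach G (seg ε i j) (x i) (x j) := by
  induction j, hij using Nat.le_induction with
  | base => exact Reach.refl _ _ _
  | succ j hij ih =>
    refine ((ih (by omega)).mono (seg_mono le_rfl (by omega))).trans
      (Reach.edge (e := ε j) (mem_seg.2 ⟨j, hij, by omega, rfl⟩) (h.step j (by omega)))

theorem IsTrail.reach (h : IsTrail G S u v n x ε) : Reach G S u v := by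
  have := (h.reach_seg (Nat.zero_le n) le_rfl).mono (h.seg_subset le_rfl)
  rwa [h.start, h.finish] at this

/-- Connected vertices are joined by a connected join. -/
theorem Reach.join (h : Reach G S u v) :
    ∃ M ⊆ S, bd G M = chi u + chi v ∧ ∀ e ∈ M, Reach G M u (G e).1 ∧ Reach G M u (G e).2 := by
  have h1 : ∃ W ⊆ S, bd G W = chi u + chi v := by
    induction h with
    | refl =>
      refine ⟨∅, Finset.empty_subset _, ?_⟩
      simp only [bd, Finset.sum_empty]
      linear_combination -chi u * two_zero (V := V)
    | @tail w v _ hs ih =>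
      obtain ⟨W, hW, hb⟩ := ih
      obtain ⟨e, he, hG⟩ := hs
      refine ⟨symmDiff W {e}, ?_, ?_⟩
      · intro f hf
        rcases Finset.mem_symmDiff.1 hf with hf | hf
        · exact hW hf.1
        · rw [Finset.mem_singleton.1 hf.1]
          exact he
      · have h2 : bd G {e} = chi w + chi v := by
          simpa [bd] using bd_edge hG
        rw [bd_symmDiff, hb, h2]
        linear_combination chi w * two_zero (V := V)
  obtain ⟨W, hW, hb⟩ := h1
  by_cases hE : Nonempty E
  · obtain ⟨n, x, ε, ht⟩ := exists_trail_of_join hb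
    have hr : ∀ i ≤ n, Reach G (seg ε 0 n) u (x i) := by
      intro i hi
      have := (ht.reach_seg (Nat.zero_le i) hi).mono (seg_mono le_rfl hi)
      rwa [ht.start] at this
    refine ⟨seg ε 0 n, (ht.seg_subset le_rfl).trans hW, ?_, ?_⟩
    · rw [ht.bd_seg (Nat.zero_le n) le_rfl, ht.start, ht.finish]
    · intro e he
      obtain ⟨k, -, hk, rfl⟩ := mem_seg.1 he
      have h1 := hr k (by omega)
      have h2 := hr (k + 1) (by omega)
      rcases ht.step k hk with h | h <;> rw [h]
      · exact ⟨h1, h2⟩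
      · exact ⟨h2, h1⟩
  · exact ⟨W, hW, hb, fun e _ => absurd ⟨e⟩ hE⟩

end Trail

theorem reach_of_join {V E : Type} [DecidableEq E] {G : E → V × V} {S : Finset E} {u v : V}
    (h : bd G S = chi u + chi v) : Reach G S u v := by
  by_cases huv : u = v
  · rw [huv]
    exact Reach.refl _ _ _
  · obtain ⟨w, hwu, hw, n, x, ε, ht⟩ :=
      exists_trail_of_odd G S u (by simp [h, chi_self, chi_ne huv])
    have : w = v := by
      refine eq_of_chi_ne fun h0 => ?_
      simp [h, chi_ne hwu, h0] at hw
    rw [this] at ht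
    exact ht.reach

/-! ### Rerouting -/

section Core
set_option linter.unusedSectionVars false
variable {V E : Type} [DecidableEq E] (G : E → V × V) (E1 : Finset E) (p q r s z z' : V)

/-- Within the edge set `E1` there are pairwise disjoint joins for the demands `zz'`, `ps`
and `rq`. -/
def Good : Prop :=
  ∃ Z W1 W2 : Finset E, Z ⊆ E1 ∧ W1 ⊆ E1 ∧ W2 ⊆ E1 ∧ Disjoint Z W1 ∧ Disjoint Z W2 ∧
    Disjoint W1 W2 ∧ bd G Z = chi z + chi z' ∧ bd G W1 = chi p + chi s ∧
    bd G W2 = chi r + chi q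

/-- `Z` is a `z`–`z'` join whose complement in `E1` connects `p` to `q` and `r` to `s`. -/
def Config (Z : Finset E) : Prop :=
  Z ⊆ E1 ∧ bd G Z = chi z + chi z' ∧ Reach G (E1 \ Z) p q ∧ Reach G (E1 \ Z) r s

open Classical in
/-- The edges outside `Z` lying in the component of `p` or of `r` of the complement of `Z`. -/
noncomputable def core (Z : Finset E) : Finset E :=
  {e ∈ E1 \ Z | Reach G (E1 \ Z) p (G e).1 ∨ Reach G (E1 \ Z) r (G e).1}

variable {G E1 p q r s z z'}

theorem Good.swap (h : Good G E1 r s p q z z') : Good G E1 p q r s z z' := by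
  obtain ⟨Z, W1, W2, h1, h2, h3, h4, h5, h6, h7, h8, h9⟩ := h
  exact ⟨Z, W2, W1, h1, h3, h2, h5, h4, h6.symm, h7, h9, h8⟩

theorem Config.swap {Z : Finset E} (h : Config G E1 p q r s z z' Z) :
    Config G E1 r s p q z z' Z :=
  ⟨h.1, h.2.1, h.2.2.2, h.2.2.1⟩

theorem core_swap (Z : Finset E) : core G E1 p r Z = core G E1 r p Z := by
  ext e
  simp only [core, Finset.mem_filter]
  tauto

theorem bd_compl {F Z : Finset E} (hE : bd G E1 = chi p + chi q + chi r + chi s + chi z + chi z')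
    (hZ : Z ⊆ E1) (hb : bd G Z = chi z + chi z') (hF : F = E1 \ Z) :
    bd G F = chi p + chi q + chi r + chi s := by
  rw [hF, bd_sdiff G hZ, hE, hb]
  linear_combination (chi z + chi z') * two_zero (V := V)

/-- If all four terminals lie in one component of the complement of `Z`, any `p`–`s` join there
leaves an `r`–`q` join behind. -/
theorem good_of_meet {Z : Finset E}
    (hE : bd G E1 = chi p + chi q + chi r + chi s + chi z + chi z')
    (hZ : Z ⊆ E1) (hb : bd G Z = chi z + chi z')
    (hps : Reach G (E1 \ Z) p s) : Good G E1 p q r s z z' := by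
  obtain ⟨W, hW, hWb, -⟩ := hps.join
  refine ⟨Z, W, (E1 \ Z) \ W, hZ, hW.trans Finset.sdiff_subset,
    Finset.sdiff_subset.trans Finset.sdiff_subset, ?_, ?_, Finset.disjoint_sdiff, hb, hWb, ?_⟩
  · exact Finset.disjoint_sdiff.mono_right hW
  · exact Finset.disjoint_sdiff.mono_right Finset.sdiff_subset
  · rw [bd_sdiff G hW, hWb, bd_compl hE hZ hb rfl]
    linear_combination (chi p + chi s) * two_zero (V := V)

/-- Let `x1`, `x2` lie in the component of `p` in `F`. Some `x1`–`x2` join in this component leaves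
`p` connected to `x1` or `x2`. Indeed, let a connected `x1`–`x2` join `M` disconnect `p` from `x1`
and `x2`. By parity `F \ M` contains a second `x1`–`x2` join `M2`, and `p` is connected in `F \ M`
to a vertex of `M`, hence to `x1` outside `M2`. -/
theorem exists_join_keeping {F : Finset E} {x1 x2 : V}
    (hF : bd G F = chi p + chi q + chi r + chi s) (hpr : ¬ Reach G F p r) (hrs : Reach G F r s)
    (h1 : Reach G F p x1) (h2 : Reach G F p x2) :
    ∃ M ⊆ F, bd G M = chi x1 + chi x2 ∧ (∀ e ∈ M, Reach G F p (G e).1) ∧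
      (Reach G (F \ M) p x1 ∨ Reach G (F \ M) p x2) := by
  have hps : ¬ Reach G F p s := fun h => hpr (h.trans hrs.symm)
  obtain ⟨M, hMF, hMb, hMc⟩ := (h1.symm.trans h2).join
  by_cases hd : Reach G (F \ M) p x1 ∨ Reach G (F \ M) p x2
  · exact ⟨M, hMF, hMb, fun e he => h1.trans ((hMc e he).1.mono hMF), hd⟩
  rw [not_or] at hd
  obtain ⟨hd1, hd2⟩ := hd
  have hsub : F \ M ⊆ F := Finset.sdiff_subset
  have hb1 : bd G (F \ M) = chi p + chi q + chi r + chi s + chi x1 + chi x2 := by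
    rw [bd_sdiff G hMF, hF, hMb]
    ring
  -- an odd vertex of `F \ M` is one of the six candidates
  have hodd : ∀ v, bd G (F \ M) v = 1 →
      v = p ∨ v = q ∨ v = r ∨ v = s ∨ v = x1 ∨ v = x2 := by
    intro v hv
    by_contra hne
    simp only [not_or] at hne
    obtain ⟨a1, a2, a3, a4, a5, a6⟩ := hne
    simp [hb1, chi_ne a1, chi_ne a2, chi_ne a3, chi_ne a4, chi_ne a5, chi_ne a6] at hv
  have hne : ∀ {v w}, ¬ Reach G F v w → v ≠ w := by
    rintro v w h rfl
    exact h (Reach.refl _ _ _)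
  have hne' : ∀ {v w}, ¬ Reach G (F \ M) v w → v ≠ w := by
    rintro v w h rfl
    exact h (Reach.refl _ _ _)
  have hpq : Reach G (F \ M) p q := by
    by_cases hpq : p = q
    · rw [hpq]
      exact Reach.refl _ _ _
    · obtain ⟨v, hvp, hv, n, x, ε, ht⟩ := exists_trail_of_odd G (F \ M) p (by
        simp [hb1, chi_self, chi_ne hpq, chi_ne (hne hpr), chi_ne (hne hps), chi_ne (hne' hd1),
          chi_ne (hne' hd2)])
      have hr := ht.reach
      rcases hodd v hv with rfl | rfl | rfl | rfl | rfl | rfl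
      · exact absurd rfl hvp
      · exact hr
      · exact absurd (hr.mono hsub) hpr
      · exact absurd (hr.mono hsub) hps
      · exact absurd hr hd1
      · exact absurd hr hd2
  have hxr : ¬ Reach G F x1 r := fun h => hpr (h1.trans h)
  have hxs : ¬ Reach G F x1 s := fun h => hps (h1.trans h)
  have hxp : ¬ Reach G (F \ M) x1 p := fun h => hd1 h.symm
  have hxq : ¬ Reach G (F \ M) x1 q := fun h => hxp (h.trans hpq.symm)
  have hxx : Reach G (F \ M) x1 x2 := by
    by_cases hxx : x1 = x2
    · rw [hxx]
      exact Reach.refl _ _ _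
    · obtain ⟨v, hvp, hv, n, x, ε, ht⟩ := exists_trail_of_odd G (F \ M) x1 (by
        simp [hb1, chi_self, chi_ne hxx, chi_ne (hne hxr), chi_ne (hne hxs), chi_ne (hne' hxp),
          chi_ne (hne' hxq)])
      have hr := ht.reach
      rcases hodd v hv with rfl | rfl | rfl | rfl | rfl | rfl
      · exact absurd hr hxp
      · exact absurd hr hxq
      · exact absurd (hr.mono hsub) hxr
      · exact absurd (hr.mono hsub) hxs
      · exact absurd rfl hvp
      · exact hr
  obtain ⟨M2, hM2F, hM2b, hM2c⟩ := hxx.join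
  refine ⟨M2, hM2F.trans hsub, hM2b,
    fun e he => h1.trans ((hM2c e he).1.mono (hM2F.trans hsub)), Or.inl ?_⟩
  -- the component of `p` in `F \ M` touches `M`
  obtain ⟨w, hpw, hxw⟩ : ∃ w, Reach G (F \ M) p w ∧ Reach G M x1 w := by
    by_contra hno
    push Not at hno
    refine hd1 (h1.closed {v | Reach G (F \ M) p v} (fun e he => ?_) (Reach.refl _ _ _))
    by_cases heM : e ∈ M
    · exact ⟨fun h => absurd (hMc e heM).1 (hno _ h), fun h => absurd (hMc e heM).2 (hno _ h)⟩
    · have := Reach.ends (G := G) (Finset.mem_sdiff.2 ⟨he, heM⟩)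
      exact ⟨fun h => Reach.trans h this, fun h => Reach.trans h this.symm⟩
  have hMM2 : M ⊆ F \ M2 := fun e he =>
    Finset.mem_sdiff.2 ⟨hMF he, fun h => (Finset.mem_sdiff.1 (hM2F h)).2 he⟩
  refine Reach.trans ?_ (hxw.symm.mono hMM2)
  refine (Reach.avoid (fun e he => (hM2c e he).1.mono hM2F) hxp hpw).mono ?_
  exact Finset.sdiff_subset_sdiff hsub le_rfl

/-- The rerouting step. The trail of a configuration `Z` passes through `x1`, then `y`, then `x2`,
where `x1` and `x2` share a component of the complement but `y` lies in the component of `r`.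
The portion `L` between `x1` and `x2` is exchanged for a join inside the component of `x1`: if this
is the component of `p`, then `L` links `p` to `r`; otherwise, `core` grows. -/
theorem reroute {Z L : Finset E} {x1 x2 y : V}
    (hE : bd G E1 = chi p + chi q + chi r + chi s + chi z + chi z')
    (hZ : Config G E1 p q r s z z' Z) (hpr : ¬ Reach G (E1 \ Z) p r)
    (hLZ : L ⊆ Z) (hLb : bd G L = chi x1 + chi x2)
    (hL1 : Reach G L y x1) (hL2 : Reach G L y x2) (hL : ∃ e ∈ L, Reach G L y (G e).1)
    (hxx : Reach G (E1 \ Z) x1 x2) (hry : Reach G (E1 \ Z) r y)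
    (hxy : ¬ Reach G (E1 \ Z) x1 y) :
    Good G E1 p q r s z z' ∨
      ∃ Z', Config G E1 p q r s z z' Z' ∧ (core G E1 p r Z).card < (core G E1 p r Z').card := by
  obtain ⟨hZE, hZb, hpq, hrs⟩ := hZ
  set F := E1 \ Z with hFdef
  have hFb := bd_compl hE hZE hZb hFdef
  have hxr : ¬ Reach G F x1 r := fun h => hxy (h.trans hry)
  -- exchanging `L` for a join `M` in the complement
  have exch : ∀ M ⊆ F, bd G M = chi x1 + chi x2 →
      ((Z \ L) ∪ M ⊆ E1 ∧ bd G ((Z \ L) ∪ M) = chi z + chi z' ∧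
        F \ M ⊆ E1 \ ((Z \ L) ∪ M) ∧ L ⊆ E1 \ ((Z \ L) ∪ M)) := by
    intro M hM hMb
    have hdis : ∀ e ∈ M, e ∈ E1 ∧ e ∉ Z := fun e he => Finset.mem_sdiff.1 (hM he)
    refine ⟨?_, ?_, ?_, ?_⟩
    · intro e he
      rcases Finset.mem_union.1 he with he | he
      · exact hZE (Finset.mem_sdiff.1 he).1
      · exact (hdis e he).1
    · rw [bd_union, bd_sdiff G hLZ, hLb, hZb, hMb]
      · linear_combination (chi x1 + chi x2) * two_zero (V := V)
      · rw [Finset.disjoint_left]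
        exact fun e he heM => (hdis e heM).2 (Finset.mem_sdiff.1 he).1
    · intro e he
      simp only [hFdef, Finset.mem_sdiff, Finset.mem_union] at he ⊢
      tauto
    · intro e he
      have h1 := hLZ he
      have h2 := hZE h1
      have h3 := fun h => (hdis e h).2 h1
      simp only [Finset.mem_sdiff, Finset.mem_union]
      tauto
  by_cases hpx : Reach G F p x1
  · left
    obtain ⟨M, hMF, hMb, hMp, hd⟩ := exists_join_keeping hFb hpr hrs hpx (hpx.trans hxx)
    obtain ⟨hA, hB, hC, hD⟩ := exch M hMF hMb
    refine good_of_meet hE hA hB ?_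
    have hpy : Reach G (E1 \ ((Z \ L) ∪ M)) p y := by
      rcases hd with hd | hd
      · exact (hd.mono hC).trans (hL1.symm.mono hD)
      · exact (hd.mono hC).trans (hL2.symm.mono hD)
    refine hpy.trans (Reach.mono hC (Reach.avoid hMp ?_ (hry.symm.trans hrs)))
    exact fun h => hpr (h.trans hry.symm)
  · right
    obtain ⟨M, hMF, hMb, hMc⟩ := hxx.join
    have hMx : ∀ e ∈ M, Reach G F x1 (G e).1 := fun e he => (hMc e he).1.mono hMF
    obtain ⟨hA, hB, hC, hD⟩ := exch M hMF hMb
    have hP : ∀ v, Reach G F p v → Reach G (E1 \ ((Z \ L) ∪ M)) p v := fun v h =>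
      (Reach.avoid hMx (fun h => hpx h.symm) h).mono hC
    have hR : ∀ v, Reach G F r v → Reach G (E1 \ ((Z \ L) ∪ M)) r v := fun v h =>
      (Reach.avoid hMx hxr h).mono hC
    refine ⟨_, ⟨hA, hB, hP q hpq, hR s hrs⟩, Finset.card_lt_card ?_⟩
    rw [Finset.ssubset_iff_of_subset]
    · obtain ⟨e, he, hye⟩ := hL
      refine ⟨e, ?_, ?_⟩
      · simp only [core, Finset.mem_filter]
        exact ⟨hD he, Or.inr ((hR y hry).trans (hye.mono hD))⟩
      · simp only [core, Finset.mem_filter, ← hFdef]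
        exact fun h => (Finset.mem_sdiff.1 h.1).2 (hLZ he)
    · intro e he
      simp only [core, Finset.mem_filter, ← hFdef] at he ⊢
      refine ⟨hC (Finset.mem_sdiff.2 ⟨he.1, fun heM => ?_⟩), he.2.imp (hP _) (hR _)⟩
      rcases he.2 with h | h
      · exact hpx (h.trans (hMx e heM).symm)
      · exact hxr ((hMx e heM).trans h.symm)

/-! ### Either the demands can be routed or there is a cut with at most one edge -/

open Classical in
/-- The edges of `S` with exactly one endpoint in `U`. -/
noncomputable def cutE {V E : Type} (G : E → V × V) (S : Finset E) (U : Set V) : Finset E :=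
  {e ∈ S | ((G e).1 ∈ U ∧ (G e).2 ∉ U) ∨ ((G e).2 ∈ U ∧ (G e).1 ∉ U)}

theorem cutE_subset {V E : Type} {G : E → V × V} {S T : Finset E} {U : Set V}
    (h : ∀ e ∈ S, e ∉ T → ((G e).1 ∈ U ↔ (G e).2 ∈ U)) : cutE G S U ⊆ T := by
  intro e he
  simp only [cutE, Finset.mem_filter] at he
  by_contra hT
  have := h e he.1 hT
  tauto

theorem cutE_compl {V E : Type} (G : E → V × V) (S : Finset E) (U : Set V) :
    cutE G S Uᶜ = cutE G S U := by
  ext e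
  simp only [cutE, Finset.mem_filter, Set.mem_compl_iff]
  tauto

/-- A set separating `p`, `q` from `r`, `s` and crossed by at most one edge of `E1`. -/
def SmallCut {V E : Type} (G : E → V × V) (E1 : Finset E) (p q r s : V) : Prop :=
  ∃ U : Set V, p ∈ U ∧ q ∈ U ∧ r ∉ U ∧ s ∉ U ∧ (cutE G E1 U).card ≤ 1

theorem SmallCut.swap {V E : Type} {G : E → V × V} {E1 : Finset E} {p q r s : V}
    (h : SmallCut G E1 r s p q) : SmallCut G E1 p q r s := by
  obtain ⟨U, h1, h2, h3, h4, h5⟩ := h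
  exact ⟨Uᶜ, h3, h4, fun h => h h1, fun h => h h2, by rwa [cutE_compl]⟩

/-- If the trail misses the component of `p`, then this component is not left by any edge. -/
theorem smallCut_of_missed {F : Finset E} {n : ℕ} {x : ℕ → V} {ε : ℕ → E}
    (hcov : ∀ e ∈ E1, e ∈ F ∨ ∃ k < n, e = ε k)
    (hstep : ∀ i < n, G (ε i) = (x i, x (i + 1)) ∨ G (ε i) = (x (i + 1), x i))
    (hpq : Reach G F p q) (hrs : Reach G F r s) (hpr : ¬ Reach G F p r)
    (hmiss : ∀ i ≤ n, ¬ Reach G F p (x i)) : SmallCut G E1 p q r s := by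
  refine ⟨{v | Reach G F p v}, Reach.refl _ _ _, hpq, hpr, fun h => hpr (Reach.trans h hrs.symm),
    (Finset.card_le_card (cutE_subset (T := ∅) fun e he _ => ?_)).trans (by simp)⟩
  rcases hcov e he with he | ⟨k, hk, rfl⟩
  · exact ⟨fun h => Reach.trans h (Reach.ends he), fun h => Reach.trans h (Reach.ends he).symm⟩
  · have h1 := hmiss k hk.le
    have h2 := hmiss (k + 1) hk
    rcases hstep k hk with h | h <;> rw [h]
    · exact ⟨fun h => absurd h h1, fun h => absurd h h2⟩
    · exact ⟨fun h => absurd h h2, fun h => absurd h h1⟩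

/-- Suppose the trail visits the component of `p` for the last time at index `i`, visits the
component of `r` later, and never returns to a component after an intermediate visit to another
component containing `p` or `r`. Then the edge following index `i` is the only edge leaving the union
of all components visited up to index `i`. -/
theorem smallCut_of_last {F : Finset E} {n i m : ℕ} {x : ℕ → V} {ε : ℕ → E}
    (hcov : ∀ e ∈ E1, e ∈ F ∨ ∃ k < n, e = ε k)
    (hstep : ∀ i < n, G (ε i) = (x i, x (i + 1)) ∨ G (ε i) = (x (i + 1), x i))
    (hpq : Reach G F p q) (hrs : Reach G F r s) (hpr : ¬ Reach G F p r)
    (hstar : ∀ i j k, i < j → j < k → k ≤ n → (Reach G F p (x j) ∨ Reach G F r (x j)) →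
      Reach G F (x i) (x k) → Reach G F (x i) (x j))
    (hi : Reach G F p (x i)) (hlast : ∀ k, i < k → k ≤ n → ¬ Reach G F p (x k))
    (him : i < m) (hmn : m ≤ n) (hm : Reach G F r (x m)) : SmallCut G E1 p q r s := by
  have hr : ∀ j ≤ i, ¬ Reach G F (x j) r := by
    intro j hj h
    rcases hj.lt_or_eq with hj | rfl
    · exact hpr (hi.trans ((hstar j i m hj him hmn (Or.inl hi) (h.trans hm)).symm.trans h))
    · exact hpr (hi.trans h)
  have hafter : ∀ j ≤ i, ∀ k, i < k → k ≤ n → ¬ Reach G F (x j) (x k) := by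
    intro j hj k hk hkn h
    rcases hj.lt_or_eq with hj | rfl
    · have := hstar j i k hj hk hkn (Or.inl hi) h
      exact hlast k hk hkn (hi.trans (this.symm.trans h))
    · exact hlast k hk hkn (hi.trans h)
  refine ⟨{v | ∃ j ≤ i, Reach G F (x j) v}, ⟨i, le_rfl, hi.symm⟩, ⟨i, le_rfl, hi.symm.trans hpq⟩,
    fun ⟨j, hj, h⟩ => hr j hj h, fun ⟨j, hj, h⟩ => hr j hj (h.trans hrs.symm),
    (Finset.card_le_card (cutE_subset (T := {ε i}) fun e he hne => ?_)).trans (by simp)⟩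
  rcases hcov e he with he | ⟨k, hk, rfl⟩
  · exact ⟨fun ⟨j, hj, h⟩ => ⟨j, hj, h.trans (Reach.ends he)⟩,
      fun ⟨j, hj, h⟩ => ⟨j, hj, h.trans (Reach.ends he).symm⟩⟩
  · have hki : k ≠ i := fun h => hne (by simp [h])
    rcases hki.lt_or_gt with hki | hki
    · have h1 : x k ∈ {v | ∃ j ≤ i, Reach G F (x j) v} := ⟨k, hki.le, Reach.refl _ _ _⟩
      have h2 : x (k + 1) ∈ {v | ∃ j ≤ i, Reach G F (x j) v} := ⟨k + 1, hki, Reach.refl _ _ _⟩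
      rcases hstep k hk with h | h <;> rw [h]
      · exact ⟨fun _ => h2, fun _ => h1⟩
      · exact ⟨fun _ => h1, fun _ => h2⟩
    · have h1 : x k ∉ {v | ∃ j ≤ i, Reach G F (x j) v} := fun ⟨j, hj, h⟩ =>
        hafter j hj k hki hk.le h
      have h2 : x (k + 1) ∉ {v | ∃ j ≤ i, Reach G F (x j) v} := fun ⟨j, hj, h⟩ =>
        hafter j hj (k + 1) (by omega) hk h
      rcases hstep k hk with h | h <;> rw [h]
      · exact ⟨fun h => absurd h h1, fun h => absurd h h2⟩
      · exact ⟨fun h => absurd h h2, fun h => absurd h h1⟩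

theorem exists_last {P : ℕ → Prop} {n i : ℕ} (hi : i ≤ n) (h : P i) :
    ∃ m ≤ n, P m ∧ ∀ k, m < k → k ≤ n → ¬ P k := by
  classical
  refine ⟨Nat.findGreatest P n, Nat.findGreatest_le n, Nat.findGreatest_spec hi h,
    fun k hk hkn => Nat.findGreatest_is_greatest hk hkn⟩

/-- The uncrossing theorem: from routed demands `zz'`, `pq`, `rs` in a graph whose odd
vertices are these terminals, one obtains routed demands `zz'`, `ps`, `rq` or a small cut.
Among the configurations one with the largest `core` is chosen. -/
theorem good_or_smallCut [Nonempty E] {Z0 : Finset E}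
    (hE : bd G E1 = chi p + chi q + chi r + chi s + chi z + chi z')
    (hZ0 : Config G E1 p q r s z z' Z0) :
    Good G E1 p q r s z z' ∨ SmallCut G E1 p q r s := by
  classical
  by_cases hgood : Good G E1 p q r s z z'
  · exact Or.inl hgood
  right
  obtain ⟨Z2, hZ2, hmax2⟩ := Finset.exists_max_image
    (E1.powerset.filter fun Z => Config G E1 p q r s z z' Z) (fun Z => (core G E1 p r Z).card)
    ⟨Z0, by simpa using ⟨hZ0.1, hZ0⟩⟩
  replace hZ2 := (Finset.mem_filter.1 hZ2).2
  obtain ⟨n, x, ε, ht⟩ := exists_trail_of_join hZ2.2.1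
  obtain ⟨Z, hZdef⟩ : ∃ Z, Z = seg ε 0 n := ⟨_, rfl⟩
  have hZZ2 : Z ⊆ Z2 := by
    rw [hZdef]
    exact ht.seg_subset le_rfl
  have hFF : E1 \ Z2 ⊆ E1 \ Z := Finset.sdiff_subset_sdiff le_rfl hZZ2
  have hZ : Config G E1 p q r s z z' Z := by
    refine ⟨hZZ2.trans hZ2.1, ?_, hZ2.2.2.1.mono hFF, hZ2.2.2.2.mono hFF⟩
    rw [hZdef, ht.bd_seg (Nat.zero_le n) le_rfl, ht.start, ht.finish]
  have hmax : ∀ Z', Config G E1 p q r s z z' Z' →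
      (core G E1 p r Z').card ≤ (core G E1 p r Z).card := by
    intro Z' hZ'
    refine (hmax2 Z' (by simpa using ⟨hZ'.1, hZ'⟩)).trans (Finset.card_le_card ?_)
    intro e he
    simp only [core, Finset.mem_filter] at he ⊢
    exact ⟨hFF he.1, he.2.imp (Reach.mono hFF) (Reach.mono hFF)⟩
  have hpr : ¬ Reach G (E1 \ Z) p r := fun h =>
    hgood (good_of_meet hE hZ.1 hZ.2.1 (h.trans hZ.2.2.2))
  have hpq := hZ.2.2.1
  have hrs := hZ.2.2.2
  have hstar : ∀ i j k, i < j → j < k → k ≤ n →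
      (Reach G (E1 \ Z) p (x j) ∨ Reach G (E1 \ Z) r (x j)) →
      Reach G (E1 \ Z) (x i) (x k) → Reach G (E1 \ Z) (x i) (x j) := by
    intro i j k hij hjk hkn hj hik
    by_contra hne
    have hLZ : seg ε i k ⊆ Z := by
      rw [hZdef]
      exact seg_mono (Nat.zero_le i) hkn
    have hLb := ht.bd_seg (hij.trans hjk).le hkn
    have hL1 := (ht.reach_seg hij.le (hjk.le.trans hkn)).symm.mono (seg_mono le_rfl hjk.le)
    have hL2 := (ht.reach_seg hjk.le hkn).mono (seg_mono hij.le le_rfl)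
    have hjm : ε j ∈ seg ε i k := mem_seg.2 ⟨j, hij.le, hjk, rfl⟩
    have hL : ∃ e ∈ seg ε i k, Reach G (seg ε i k) (x j) (G e).1 := by
      refine ⟨ε j, hjm, ?_⟩
      rcases ht.step j (by omega) with h | h
      · rw [h]
        exact Reach.refl _ _ _
      · rw [h]
        exact Reach.edge hjm (Or.inr h)
    rcases hj with hj | hj
    · rcases reroute (p := r) (q := s) (r := p) (s := q) (by rw [hE]; ring) hZ.swap
        (fun h => hpr h.symm) hLZ hLb hL1 hL2 hL hik hj hne with h | ⟨Z', h1, h2⟩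
      · exact hgood h.swap
      · rw [core_swap, core_swap (r := p)] at h2
        exact absurd (hmax Z' h1.swap) (not_le.2 h2)
    · rcases reroute hE hZ hpr hLZ hLb hL1 hL2 hL hik hj hne with h | ⟨Z', h1, h2⟩
      · exact hgood h
      · exact absurd (hmax Z' h1) (not_le.2 h2)
  have hcov : ∀ e ∈ E1, e ∈ E1 \ Z ∨ ∃ k < n, e = ε k := by
    intro e he
    by_cases heZ : e ∈ Z
    · rw [hZdef] at heZ
      obtain ⟨k, -, hk, rfl⟩ := mem_seg.1 heZ
      exact Or.inr ⟨k, hk, rfl⟩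
    · exact Or.inl (Finset.mem_sdiff.2 ⟨he, heZ⟩)
  have hrp : ¬ Reach G (E1 \ Z) r p := fun h => hpr h.symm
  by_cases hp : ∃ i ≤ n, Reach G (E1 \ Z) p (x i)
  swap
  · push Not at hp
    exact smallCut_of_missed hcov ht.step hpq hrs hpr hp
  by_cases hr : ∃ i ≤ n, Reach G (E1 \ Z) r (x i)
  swap
  · push Not at hr
    exact (smallCut_of_missed hcov ht.step hrs hpq hrp hr).swap
  obtain ⟨i, hin, hi⟩ := hp
  obtain ⟨j, hjn, hj⟩ := hr
  obtain ⟨a, han, ha, halast⟩ :=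
    exists_last (P := fun i => Reach G (E1 \ Z) p (x i)) hin hi
  obtain ⟨b, hbn, hb, hblast⟩ :=
    exists_last (P := fun i => Reach G (E1 \ Z) r (x i)) hjn hj
  rcases lt_trichotomy a b with hab | rfl | hab
  · exact smallCut_of_last hcov ht.step hpq hrs hpr hstar ha halast hab hbn hb
  · exact absurd (ha.trans hb.symm) hpr
  · exact (smallCut_of_last hcov ht.step hrs hpq hrp
      (fun i j k h1 h2 h3 h4 => hstar i j k h1 h2 h3 h4.symm) hb hblast hab han ha).swap

end Core

/-! ### Degrees, cuts and feasibility in terms of boundaries -/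

theorem mdeg_eq {V E : Type} [Fintype E] (G : E → V × V) (v : V) :
    (mdeg G v : ZMod 2) = bd G Finset.univ v := by
  classical
  rw [mdeg, Set.ncard_eq_toFinset_card', Set.toFinset_ofPred, Finset.card_filter]
  push_cast
  rw [Fintype.sum_prod_type]
  simp only [Fintype.sum_bool, cond_true, cond_false, bd, Finset.sum_apply, Pi.add_apply, chi]
  simp only [eq_comm]

theorem mcut_eq {V E : Type} [Fintype E] (G : E → V × V) (U : Set V) :
    mcut G U = (cutE G Finset.univ U).card := by
  classical
  rw [mcut, Set.ncard_eq_toFinset_card', Set.toFinset_ofPred, cutE]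

theorem mcut_erase {V E : Type} [Fintype E] [DecidableEq E] (G : E → V × V) (e0 : E) (U : Set V) :
    mcut (fun e : {e : E // e ≠ e0} => G e.1) U = (cutE G (Finset.univ.erase e0) U).card := by
  classical
  rw [mcut, ← Set.ncard_coe_finset, ← Set.ncard_image_of_injective _ Subtype.val_injective]
  congr 1
  ext e
  simp [cutE, and_comm]

open Classical in
/-- `1` if the pair `x` is separated by `U`, and `0` otherwise. -/
noncomputable def cross {V : Type} (U : Set V) (x : V × V) : ℕ :=
  if (x.1 ∈ U ∧ x.2 ∉ U) ∨ (x.2 ∈ U ∧ x.1 ∉ U) then 1 else 0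

theorem card_cutE {V E : Type} (G : E → V × V) (S : Finset E) (U : Set V) :
    (cutE G S U).card = ∑ e ∈ S, cross U (G e) := by
  classical
  rw [cutE, Finset.card_filter]
  rfl

theorem univ_three {i j k : Fin 3} (hij : i ≠ j) (hik : i ≠ k) (hjk : j ≠ k) :
    (Finset.univ : Finset (Fin 3)) = {i, j, k} := by
  revert i j k
  decide

theorem sum_three {M : Type*} [AddCommMonoid M] (f : Fin 3 → M) {i j k : Fin 3} (hij : i ≠ j)
    (hik : i ≠ k) (hjk : j ≠ k) : ∑ m, f m = f i + f j + f k := by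
  rw [univ_three hij hik hjk, Finset.sum_insert (by simp [hij, hik]),
    Finset.sum_insert (by simp [hjk]), Finset.sum_singleton, add_assoc]

open Classical in
/-- The parity of a cut depends on the boundary only: it is the number of odd vertices in `U`. -/
theorem cut_parity_aux {V E : Type} (G : E → V × V) (S : Finset E) (U : Set V) (N : Finset V)
    (hN : ∀ e ∈ S, (G e).1 ∈ N ∧ (G e).2 ∈ N) :
    ((cutE G S U).card : ZMod 2) = ∑ y ∈ N, (if y ∈ U then bd G S y else 0) := by
  have h1 : ∀ w ∈ N, ∑ y ∈ N, (if y ∈ U then chi w y else 0) =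
      if w ∈ U then (1 : ZMod 2) else 0 := by
    intro w hw
    rw [Finset.sum_eq_single_of_mem w hw, chi_self]
    intro y _ hy
    simp [chi_ne hy]
  have h2 : ∀ y, (if y ∈ U then bd G S y else 0) =
      ∑ e ∈ S, ((if y ∈ U then chi (G e).1 y else 0) + (if y ∈ U then chi (G e).2 y else 0)) := by
    intro y
    by_cases hy : y ∈ U <;> simp [hy, bd]
  simp only [h2]
  rw [Finset.sum_comm, card_cutE]
  push_cast
  refine Finset.sum_congr rfl fun e he => ?_
  rw [Finset.sum_add_distrib, h1 _ (hN e he).1, h1 _ (hN e he).2, cross]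
  by_cases ha : (G e).1 ∈ U <;> by_cases hb : (G e).2 ∈ U <;> simp [ha, hb]
  decide

theorem cut_parity {V E E' : Type} (G : E → V × V) (S : Finset E) (H : E' → V × V)
    (T : Finset E') (h : bd G S = bd H T) (U : Set V) :
    (cutE G S U).card % 2 = (cutE H T U).card % 2 := by
  classical
  have h1 := cut_parity_aux G S U (S.image (fun e => (G e).1) ∪ S.image (fun e => (G e).2) ∪
    (T.image (fun e => (H e).1) ∪ T.image (fun e => (H e).2))) (fun e he => by
      simp only [Finset.mem_union, Finset.mem_image]
      exact ⟨Or.inl (Or.inl ⟨e, he, rfl⟩), Or.inl (Or.inr ⟨e, he, rfl⟩)⟩)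
  have h2 := cut_parity_aux H T U (S.image (fun e => (G e).1) ∪ S.image (fun e => (G e).2) ∪
    (T.image (fun e => (H e).1) ∪ T.image (fun e => (H e).2))) (fun e he => by
      simp only [Finset.mem_union, Finset.mem_image]
      exact ⟨Or.inr (Or.inl ⟨e, he, rfl⟩), Or.inr (Or.inr ⟨e, he, rfl⟩)⟩)
  rw [h, ← h2] at h1
  exact (ZMod.natCast_eq_natCast_iff _ _ 2).1 h1

/-- Repeatedly traversed edges of a walk cancel modulo two; the remaining ones form a join. -/
theorem MWalk.exists_join {V E : Type} [DecidableEq E] {G : E → V × V} {u v : V}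
    (w : MWalk G u v) : ∃ W : Finset E, (∀ e ∈ W, e ∈ w.edges) ∧ bd G W = chi u + chi v := by
  induction w with
  | nil v =>
    refine ⟨∅, by simp, ?_⟩
    simp only [bd, Finset.sum_empty]
    linear_combination -chi v * two_zero (V := V)
  | @cons u v w e he p ih =>
    obtain ⟨W, hW, hb⟩ := ih
    refine ⟨symmDiff {e} W, ?_, ?_⟩
    · intro f hf
      simp only [MWalk.edges, List.mem_cons]
      rcases Finset.mem_symmDiff.1 hf with hf | hf
      · exact Or.inl (Finset.mem_singleton.1 hf.1)
      · exact Or.inr (hW f hf.1)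
    · have h2 : bd G {e} = chi u + chi v := by
        simpa [bd] using bd_edge he
      rw [bd_symmDiff, hb, h2]
      linear_combination chi v * two_zero (V := V)

theorem Reach.exists_walk {V E : Type} {G : E → V × V} {S : Finset E} {e0 : E}
    (he0 : e0 ∉ S) {u v : V} (h : Reach G S u v) :
    ∃ w : MWalk (fun e : {e : E // e ≠ e0} => G e.1) u v, ∀ e ∈ w.edges, e.1 ∈ S := by
  induction h using Relation.ReflTransGen.head_induction_on with
  | refl => exact ⟨MWalk.nil v, fun e he => by simp [MWalk.edges] at he⟩
  | head hs _ ih =>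
    obtain ⟨e, he, hG⟩ := hs
    obtain ⟨w, hw⟩ := ih
    refine ⟨MWalk.cons ⟨e, fun h => he0 (h ▸ he)⟩ hG w, fun f hf => ?_⟩
    simp only [MWalk.edges, List.mem_cons] at hf
    rcases hf with rfl | hf
    · exact he
    · exact hw f hf

theorem MFeasible.exists_joins {V E E' : Type} [DecidableEq E] {G : E → V × V} {H : E' → V × V}
    (h : MFeasible G H) : ∃ P : E' → Finset E, (∀ i j, i ≠ j → Disjoint (P i) (P j)) ∧
      ∀ i, bd G (P i) = chi (H i).1 + chi (H i).2 := by
  obtain ⟨P, hP⟩ := h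
  choose W hW hb using fun i => (P i).exists_join
  refine ⟨W, fun i j hij => ?_, hb⟩
  rw [Finset.disjoint_left]
  exact fun e h1 h2 => hP i j hij (hW i e h1) (hW j e h2)

theorem feasible_of_joins {V E : Type} [DecidableEq E] {G : E → V × V} {H : Fin 3 → V × V}
    {e0 : E} {i j k : Fin 3} (hij : i ≠ j) (hik : i ≠ k) (hjk : j ≠ k) {A B C : Finset E}
    (hA : bd G A = chi (H i).1 + chi (H i).2) (hB : bd G B = chi (H j).1 + chi (H j).2)
    (hC : bd G C = chi (H k).1 + chi (H k).2) (hAB : Disjoint A B) (hAC : Disjoint A C)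
    (hBC : Disjoint B C) (heA : e0 ∉ A) (heB : e0 ∉ B) (heC : e0 ∉ C) :
    MFeasible (fun e : {e : E // e ≠ e0} => G e.1) H := by
  have hall : ∀ m, m = i ∨ m = j ∨ m = k := fun m => by
    have := Finset.mem_univ m
    rw [univ_three hij hik hjk] at this
    simpa using this
  obtain ⟨W, hWi, hWj, hWk⟩ : ∃ W : Fin 3 → Finset E, W i = A ∧ W j = B ∧ W k = C :=
    ⟨fun m => if m = i then A else if m = j then B else C, by simp, by simp [hij.symm],
      by simp [hik.symm, hjk.symm]⟩
  have hw : ∀ m, ∃ w : MWalk (fun e : {e : E // e ≠ e0} => G e.1) (H m).1 (H m).2,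
      ∀ e ∈ w.edges, e.1 ∈ W m := by
    intro m
    refine Reach.exists_walk ?_ (reach_of_join ?_)
    · rcases hall m with rfl | rfl | rfl
      · rwa [hWi]
      · rwa [hWj]
      · rwa [hWk]
    · rcases hall m with rfl | rfl | rfl
      · rwa [hWi]
      · rwa [hWj]
      · rwa [hWk]
  choose w hw using hw
  refine ⟨w, fun m m' hmm e he he' => ?_⟩
  have h1 := hw m e he
  have h2 := hw m' e he'
  have hdis : Disjoint (W m) (W m') := by
    rcases hall m with rfl | rfl | rfl <;> rcases hall m' with rfl | rfl | rfl <;>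
      simp only [hWi, hWj, hWk] <;>
      first | exact absurd rfl hmm | assumption | (apply Disjoint.symm; assumption)
  exact Finset.disjoint_left.1 hdis h1 h2

/-- The cut condition is necessary for feasibility. -/
theorem cut_condition {V E E' : Type} [DecidableEq E] [Nonempty E] [Fintype E] [Fintype E'] {G : E → V × V}
    {H : E' → V × V} {P : E' → Finset E} (hP : ∀ i j, i ≠ j → Disjoint (P i) (P j))
    (hb : ∀ i, bd G (P i) = chi (H i).1 + chi (H i).2) (U : Set V) :
    (cutE H Finset.univ U).card ≤ (cutE G Finset.univ U).card := by
  classical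
  have h1 : ∀ i ∈ cutE H Finset.univ U, ∃ e ∈ cutE G Finset.univ U, e ∈ P i := by
    intro i hi
    simp only [cutE, Finset.mem_filter, Finset.mem_univ, true_and] at hi
    by_contra hno
    have hcl : ∀ e ∈ P i, (G e).1 ∈ U ↔ (G e).2 ∈ U := by
      intro e he
      by_contra hne
      refine hno ⟨e, ?_, he⟩
      simp only [cutE, Finset.mem_filter, Finset.mem_univ, true_and]
      tauto
    have hr := reach_of_join (hb i)
    have h2 := fun h => hr.closed U hcl h
    have h3 := fun h => hr.symm.closed U hcl h
    tauto
  choose! f hf1 hf2 using h1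
  refine Finset.card_le_card_of_injOn f hf1 fun i hi j hj hij => ?_
  by_contra hne
  exact Finset.disjoint_left.1 (hP i j hne) (hf2 i hi) (hij ▸ hf2 j hj)

/-! ### The theorem -/

/-- Let `(G, H)` be a feasible Eulerian instance with three
pairs of terminals and let `(G', H')`, obtained from `(G, H)` by a single local
move (deleting an edge `e₀` with endpoints `a, a'` of `G` and replacing the
demand edge `ab` by `a'b`), be infeasible. Then there is a subset `U ⊆ VG` with
`d_{G'}(U) + 1 = d_G(U) = d_H(U) = d_{H'}(U) − 1`; in particular
`d_H(U) ∈ {1, 2}`. -/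
theorem statement15 {V E : Type} [Fintype E] [DecidableEq E]
    (G : E → V × V) (s1 t1 s2 t2 s3 t3 : V)
    (H : Fin 3 → V × V) (hH : H = ![(s1, t1), (s2, t2), (s3, t3)])
    (euler : MEulerian G H)
    (hfeas : MFeasible G H)
    (i0 : Fin 3) (e0 : E) (a a' b : V)
    (he0 : G e0 = (a, a') ∨ G e0 = (a', a))
    (G' : {e : E // e ≠ e0} → V × V) (hG' : G' = fun e => G e.1)
    (H' : Fin 3 → V × V)
    (hmv : (H i0 = (a, b) ∧ H' = Function.update H i0 (a', b)) ∨
           (H i0 = (b, a) ∧ H' = Function.update H i0 (b, a')))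
    (hinfeas : ¬ MFeasible G' H') :
    ∃ U : Set V,
      mcut G' U + 1 = mcut G U ∧
      mcut G U = mcut H U ∧
      mcut H' U = mcut H U + 1 ∧
      (mcut H U = 1 ∨ mcut H U = 2) := by
  have hNE : Nonempty E := ⟨e0⟩
  subst hG'
  obtain ⟨P, hPd, hPb⟩ := hfeas.exists_joins
  have hb0 : chi (H i0).1 + chi (H i0).2 = chi a + chi b := by
    rcases hmv with ⟨h, -⟩ | ⟨h, -⟩ <;> rw [h]
    exact add_comm _ _
  have hb0' : chi (H' i0).1 + chi (H' i0).2 = chi a' + chi b := by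
    rcases hmv with ⟨-, h⟩ | ⟨-, h⟩ <;> rw [h, Function.update_self]
    exact add_comm _ _
  have hH' : ∀ m, m ≠ i0 → H' m = H m := by
    intro m hm
    rcases hmv with ⟨-, h⟩ | ⟨-, h⟩ <;> rw [h, Function.update_of_ne hm]
  have hEul : bd G Finset.univ = bd H Finset.univ := by
    funext v
    have h1 := (ZMod.natCast_eq_zero_iff_even).2 (euler v)
    push_cast at h1
    rw [mdeg_eq, mdeg_eq] at h1
    have h2 : (2 : ZMod 2) = 0 := by decide
    linear_combination h1 - bd H Finset.univ v * h2
  have hsum : ∀ {j k : Fin 3}, i0 ≠ j → i0 ≠ k → j ≠ k → bd G Finset.univ =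
      chi a + chi b + (chi (H j).1 + chi (H j).2) + (chi (H k).1 + chi (H k).2) := by
    intro j k h1 h2 h3
    rw [hEul, bd, sum_three _ h1 h2 h3, hb0]
  by_cases hcase : ∀ j, j ≠ i0 → e0 ∉ P j
  · -- `e0` may be assumed to be the first edge of the path for the moved demand
    exfalso
    obtain ⟨j, k, h1, h2, h3⟩ : ∃ j k, i0 ≠ j ∧ i0 ≠ k ∧ j ≠ k := by
      clear * -
      revert i0
      decide
    apply hinfeas
    have hmem : e0 ∈ Finset.univ \ (P j ∪ P k) := by
      simp [hcase j h1.symm, hcase k h2.symm]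
    have hdis : ∀ {Q : Finset E}, Q ⊆ P j ∪ P k →
        Disjoint ((Finset.univ \ (P j ∪ P k)).erase e0) Q := fun hQ =>
      (Finset.sdiff_disjoint.mono_right hQ).mono_left (Finset.erase_subset _ _)
    refine feasible_of_joins (A := (Finset.univ \ (P j ∪ P k)).erase e0) h1 h2 h3 ?_
      (by rw [hPb, hH' j h1.symm]) (by rw [hPb, hH' k h2.symm])
      (hdis Finset.subset_union_left) (hdis Finset.subset_union_right) (hPd j k h3)
      (Finset.notMem_erase _ _) (hcase j h1.symm) (hcase k h2.symm)
    rw [bd_erase G hmem he0, bd_sdiff G (Finset.subset_univ _), bd_union G (hPd j k h3),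
      hsum h1 h2 h3, hPb, hPb, hb0']
    linear_combination (chi a + (chi (H j).1 + chi (H j).2) + (chi (H k).1 + chi (H k).2)) *
      two_zero (V := V)
  push Not at hcase
  obtain ⟨j, hj, hej⟩ := hcase
  obtain ⟨k, hk, hkj⟩ : ∃ k, k ≠ i0 ∧ k ≠ j := by
    clear * -
    revert i0 j
    decide
  have hni : e0 ∉ P i0 := fun h => Finset.disjoint_left.1 (hPd i0 j hj.symm) h hej
  have hnk : e0 ∉ P k := fun h => Finset.disjoint_left.1 (hPd k j hkj) h hej
  obtain ⟨Q, hQ⟩ : ∃ Q, Q = (P j).erase e0 := ⟨_, rfl⟩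
  have hQj : Q ⊆ P j := hQ ▸ Finset.erase_subset _ _
  have hQe : e0 ∉ Q := hQ ▸ Finset.notMem_erase _ _
  have hQb : bd G Q = chi (H j).1 + chi (H j).2 + chi a + chi a' := by
    rw [hQ, bd_erase G hej he0, hPb]
  have hQi : Disjoint (P i0) Q := (hPd i0 j hj.symm).mono_right hQj
  have hQk : Disjoint Q (P k) := (hPd j k hkj.symm).mono_left hQj
  -- the case where the path through `e0` leads from `a'` to `t` after traversing `e0`
  have key : ∀ s t, (H j = (s, t) ∨ H j = (t, s)) → Reach G Q a' t →
      ∃ U : Set V, mcut (fun e : {e : E // e ≠ e0} => G e.1) U + 1 = mcut G U ∧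
        mcut G U = mcut H U ∧ mcut H' U = mcut H U + 1 ∧ (mcut H U = 1 ∨ mcut H U = 2) := by
    intro s t hst hr
    have hbj : chi (H j).1 + chi (H j).2 = chi s + chi t := bd_edge hst
    obtain ⟨M, hMQ, hMb, -⟩ := hr.join
    have hsub : ∀ {A : Finset E}, e0 ∉ A → Disjoint A (P k) →
        A ⊆ Finset.univ.erase e0 \ P k := by
      intro A h1 h2 e he
      simp only [Finset.mem_sdiff, Finset.mem_erase, Finset.mem_univ, and_true]
      exact ⟨fun h => h1 (h ▸ he), Finset.disjoint_left.1 h2 he⟩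
    have hconf : Config G (Finset.univ.erase e0) s b a' t (H k).1 (H k).2 (P k) := by
      refine ⟨fun e he => ?_, hPb k, ?_, hr.mono (hsub hQe hQk)⟩
      · exact Finset.mem_erase.2 ⟨fun h => hnk (h ▸ he), Finset.mem_univ _⟩
      · have hX : bd G (P i0 ∪ (Q \ M)) = chi s + chi b := by
          rw [bd_union G (hQi.mono_right Finset.sdiff_subset), bd_sdiff G hMQ, hPb, hQb, hMb,
            hb0, hbj]
          linear_combination (chi a + chi a' + chi t) * two_zero (V := V)
        refine (reach_of_join hX).mono (hsub ?_ ?_)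
        · simp [hni, hQe]
        · rw [Finset.disjoint_union_left]
          exact ⟨hPd i0 k hk.symm, hQk.mono_left Finset.sdiff_subset⟩
    have hE1 : bd G (Finset.univ.erase e0) =
        chi s + chi b + chi a' + chi t + chi (H k).1 + chi (H k).2 := by
      rw [bd_erase G (Finset.mem_univ _) he0, hsum hj.symm hk.symm hkj.symm, hbj]
      linear_combination chi a * two_zero (V := V)
    rcases good_or_smallCut hE1 hconf with hg | ⟨U, hsU, hbU, ha'U, htU, hU⟩
    · exfalso
      obtain ⟨Z, W1, W2, h1, h2, h3, h4, h5, h6, h7, h8, h9⟩ := hg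
      refine hinfeas (feasible_of_joins (A := W2) (B := W1) (C := Z) hj.symm hk.symm hkj.symm
        ?_ ?_ ?_ h6.symm h5.symm h4.symm (fun h => by simpa using h3 h)
        (fun h => by simpa using h2 h) (fun h => by simpa using h1 h))
      · rw [h9, hb0']
      · rw [h8, hH' j hj, hbj]
      · rw [h7, hH' k hk]
    · refine ⟨U, ?_⟩
      rw [mcut_erase, mcut_eq, mcut_eq, mcut_eq]
      have hpar := cut_parity G Finset.univ H Finset.univ hEul U
      have hcc := cut_condition hPd hPb U
      have hG0 : (cutE G Finset.univ U).card =
          cross U (G e0) + (cutE G (Finset.univ.erase e0) U).card := by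
        rw [card_cutE, card_cutE]
        exact (Finset.add_sum_erase Finset.univ (fun e => cross U (G e))
          (Finset.mem_univ e0)).symm
      have hHU : (cutE H Finset.univ U).card = cross U (H i0) + cross U (H j) + cross U (H k) := by
        rw [card_cutE, sum_three _ hj.symm hk.symm hkj.symm]
      have hHU' : (cutE H' Finset.univ U).card =
          cross U (H' i0) + cross U (H j) + cross U (H k) := by
        rw [card_cutE, sum_three _ hj.symm hk.symm hkj.symm, hH' j hj, hH' k hk]
      have hcj : cross U (H j) = 1 := by
        rcases hst with h | h <;> simp [cross, h, hsU, htU]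
      have hci' : cross U (H' i0) = 1 := by
        rcases hmv with ⟨-, h⟩ | ⟨-, h⟩ <;> simp [cross, h, hbU, ha'U]
      have hck : cross U (H k) ≤ 1 := by
        unfold cross
        split_ifs <;> omega
      by_cases haU : a ∈ U
      · have hce : cross U (G e0) = 1 := by
          rcases he0 with h | h <;> simp [cross, h, haU, ha'U]
        have hci : cross U (H i0) = 0 := by
          rcases hmv with ⟨h, -⟩ | ⟨h, -⟩ <;> simp [cross, h, hbU, haU]
        omega
      · -- otherwise the cut condition fails for `U` in the original instance
        exfalso
        have hce : cross U (G e0) = 0 := by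
          rcases he0 with h | h <;> simp [cross, h, haU, ha'U]
        have hci : cross U (H i0) = 1 := by
          rcases hmv with ⟨h, -⟩ | ⟨h, -⟩ <;> simp [cross, h, hbU, haU]
        omega
  -- by parity, `a'` is connected in `Q` to `a` or to a terminal of the demand `j`
  obtain ⟨v, hv, hr⟩ : ∃ v, (v = (H j).1 ∨ v = (H j).2 ∨ v = a) ∧ Reach G Q a' v := by
    by_cases hin : a' = (H j).1 ∨ a' = (H j).2 ∨ a' = a
    · exact ⟨a', hin, Reach.refl _ _ _⟩
    · simp only [not_or] at hin
      obtain ⟨h1, h2, h3⟩ := hin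
      obtain ⟨v, hva, hv, n, x, ε, ht⟩ := exists_trail_of_odd G Q a' (by
        simp [hQb, chi_self, chi_ne h1, chi_ne h2, chi_ne h3])
      refine ⟨v, ?_, ht.reach⟩
      by_contra hne
      simp only [not_or] at hne
      obtain ⟨h4, h5, h6⟩ := hne
      simp [hQb, chi_ne h4, chi_ne h5, chi_ne h6, chi_ne hva] at hv
  rcases hv with rfl | rfl | rfl
  · exact key (H j).2 (H j).1 (Or.inr rfl) hr
  · exact key (H j).1 (H j).2 (Or.inl rfl) hr
  · -- `e0` lies on a closed subwalk of the path for `j`, which is handed over to the path for `i0`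
    exfalso
    obtain ⟨M, hMQ, hMb, -⟩ := hr.join
    refine hinfeas (feasible_of_joins (A := P i0 ∪ M) (B := Q \ M) (C := P k) hj.symm hk.symm
      hkj.symm ?_ ?_ ?_ ?_ ?_ ?_ ?_ ?_ hnk)
    · rw [bd_union G (hQi.mono_right hMQ), hPb, hb0, hMb, hb0']
      linear_combination chi v * two_zero (V := V)
    · rw [bd_sdiff G hMQ, hQb, hMb, hH' j hj]
      linear_combination (chi v + chi a') * two_zero (V := V)
    · rw [hPb, hH' k hk]
    · rw [Finset.disjoint_union_left]
      exact ⟨hQi.mono_right Finset.sdiff_subset, Finset.disjoint_sdiff⟩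
    · rw [Finset.disjoint_union_left]
      exact ⟨hPd i0 k hk.symm, hQk.mono_left hMQ⟩
    · exact hQk.mono_left Finset.sdiff_subset
    · simp only [Finset.mem_union, not_or]
      exact ⟨hni, fun h => hQe (hMQ h)⟩
    · exact fun h => hQe (Finset.sdiff_subset h)
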